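/- arXiv:0710.5779 — 2 statements merged into one kernel-verified Lean document; each statement's English description precedes it below -/
import Mathlib

section
/- Let W be the set of orthogonal 4×4 real matrices A that map the set {±e₁, ±e₂, ±e₃, ±e₄} of signed standard basis vectors onto itself and map the unordered pair of coordinate planes {span(e₁,e₂), span(e₃,e₄)} onto itself. Then W is a subgroup of O(4,ℝ) of order 128, it contains the group H generated by R₁ = [[0,−1,0,0],[1,0,0,0],[0,0,1,0],[0,0,0,1]], R₂ = [[1,0,0,0],[0,1,0,0],[0,0,0,−1],[0,0,1,0]] and T = [[0,0,1,0],[0,0,0,1],[1,0,0,0],[0,1,0,0]], and H has index 4 in W. -/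
/-- Rotation by `π/2` in the `(e₁,e₂)`-plane, identity on the `(e₃,e₄)`-plane. -/
def R₁ : Matrix (Fin 4) (Fin 4) ℝ :=
  !![0, -1, 0, 0; 1, 0, 0, 0; 0, 0, 1, 0; 0, 0, 0, 1]

/-- Identity on the `(e₁,e₂)`-plane, rotation by `π/2` in the `(e₃,e₄)`-plane. -/
def R₂ : Matrix (Fin 4) (Fin 4) ℝ :=
  !![1, 0, 0, 0; 0, 1, 0, 0; 0, 0, 0, -1; 0, 0, 1, 0]

/-- The permutation matrix simultaneously interchanging `e₁ ↔ e₃` and `e₂ ↔ e₄`. -/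
def Tm : Matrix (Fin 4) (Fin 4) ℝ :=
  !![0, 0, 1, 0; 0, 0, 0, 1; 1, 0, 0, 0; 0, 1, 0, 0]

/-- The set of signed standard basis vectors `{±e₁, ±e₂, ±e₃, ±e₄}` of `ℝ⁴`. -/
def signedBasis : Set (Fin 4 → ℝ) :=
  {v | ∃ i : Fin 4, v = Pi.single i 1 ∨ v = -Pi.single i 1}

/-- The coordinate plane `span(e₁,e₂)` of `ℝ⁴`. -/
def plane₁₂ : Submodule ℝ (Fin 4 → ℝ) :=
  Submodule.span ℝ {(Pi.single 0 1 : Fin 4 → ℝ), (Pi.single 1 1 : Fin 4 → ℝ)}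

/-- The coordinate plane `span(e₃,e₄)` of `ℝ⁴`. -/
def plane₃₄ : Submodule ℝ (Fin 4 → ℝ) :=
  Submodule.span ℝ {(Pi.single 2 1 : Fin 4 → ℝ), (Pi.single 3 1 : Fin 4 → ℝ)}

/-- The condition defining the paper's group `ℤ/2^[3] ⊂ O(4)`: an orthogonal matrix maps
the set of signed standard basis vectors onto itself and the unordered pair of coordinate
planes `{span(e₁,e₂), span(e₃,e₄)}` onto itself. -/
def wCond (A : Matrix.orthogonalGroup (Fin 4) ℝ) : Prop :=
  (fun v => Matrix.mulVec (A : Matrix (Fin 4) (Fin 4) ℝ) v) '' signedBasis = signedBasis ∧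
  ({plane₁₂.map (Matrix.toLin' (A : Matrix (Fin 4) (Fin 4) ℝ)),
    plane₃₄.map (Matrix.toLin' (A : Matrix (Fin 4) (Fin 4) ℝ))} :
      Set (Submodule ℝ (Fin 4 → ℝ))) = {plane₁₂, plane₃₄}

theorem mem_plane₁₂ (v : Fin 4 → ℝ) : v ∈ plane₁₂ ↔ v 2 = 0 ∧ v 3 = 0 := by
  unfold plane₁₂
  rw [Submodule.mem_span_pair]
  constructor
  · rintro ⟨a, b, rfl⟩
    simp
  · rintro ⟨h2, h3⟩
    refine ⟨v 0, v 1, ?_⟩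
    ext i
    fin_cases i <;> simp [h2, h3]

theorem mem_plane₃₄ (v : Fin 4 → ℝ) : v ∈ plane₃₄ ↔ v 0 = 0 ∧ v 1 = 0 := by
  unfold plane₃₄
  rw [Submodule.mem_span_pair]
  constructor
  · rintro ⟨a, b, rfl⟩
    simp
  · rintro ⟨h2, h3⟩
    refine ⟨v 2, v 3, ?_⟩
    ext i
    fin_cases i <;> simp [h2, h3]

abbrev O4 := Matrix.orthogonalGroup (Fin 4) ℝ

theorem O4_mul_transpose (A : O4) :
    (A : Matrix (Fin 4) (Fin 4) ℝ) * (A : Matrix (Fin 4) (Fin 4) ℝ).transpose = 1 :=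
  (Matrix.mem_orthogonalGroup_iff (Fin 4) ℝ).1 A.2

theorem O4_transpose_mul (A : O4) :
    (A : Matrix (Fin 4) (Fin 4) ℝ).transpose * (A : Matrix (Fin 4) (Fin 4) ℝ) = 1 :=
  (Matrix.mem_orthogonalGroup_iff' (Fin 4) ℝ).1 A.2

theorem mem_map_iff (A : O4) (P : Submodule ℝ (Fin 4 → ℝ)) (v : Fin 4 → ℝ) :
    v ∈ P.map (Matrix.toLin' (A : Matrix (Fin 4) (Fin 4) ℝ)) ↔
      (A : Matrix (Fin 4) (Fin 4) ℝ).transpose.mulVec v ∈ P := by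
  rw [Submodule.mem_map]
  constructor
  · rintro ⟨w, hw, rfl⟩
    rw [Matrix.toLin'_apply, Matrix.mulVec_mulVec, O4_transpose_mul, Matrix.one_mulVec]
    exact hw
  · intro h
    refine ⟨_, h, ?_⟩
    rw [Matrix.toLin'_apply, Matrix.mulVec_mulVec, O4_mul_transpose, Matrix.one_mulVec]

/-- The monomial matrix with entry `s j` at `(f j, j)`. -/
def mono (f : Fin 4 → Fin 4) (s : Fin 4 → ℤˣ) : Matrix (Fin 4) (Fin 4) ℝ :=
  Matrix.of fun i j => if i = f j then ((s j : ℤ) : ℝ) else 0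

theorem sgn_sq (u : ℤˣ) : ((u : ℤ) : ℝ) * ((u : ℤ) : ℝ) = 1 := by
  rcases Int.units_eq_one_or u with h | h <;> simp [h]

theorem sgn_ne (u : ℤˣ) : ((u : ℤ) : ℝ) ≠ 0 := by
  rcases Int.units_eq_one_or u with h | h <;> simp [h]

theorem mono_orth (f : Fin 4 → Fin 4) (s : Fin 4 → ℤˣ) (hf : Function.Injective f) :
    mono f s ∈ Matrix.orthogonalGroup (Fin 4) ℝ := by
  rw [Matrix.mem_orthogonalGroup_iff']
  ext j k
  have : ∀ i, (mono f s) i j * (mono f s) i k =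
      if i = f j then (if j = k then 1 else 0) else 0 := by
    intro i
    simp only [mono, Matrix.of_apply]
    by_cases h : i = f j
    · by_cases h2 : j = k
      · subst h2
        simp [h, sgn_sq]
      · have : f j ≠ f k := fun h3 => h2 (hf h3)
        simp [h, h2, this]
    · simp [h]
  rw [Matrix.mul_apply]
  simp only [Matrix.one_apply, Matrix.transpose_apply]
  rw [Finset.sum_congr rfl (fun i _ => this i)]
  simp

theorem mono_inj {f g : Fin 4 → Fin 4} {s t : Fin 4 → ℤˣ} (h : mono f s = mono g t) :
    f = g ∧ s = t := by
  have hfg : f = g := by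
    ext1 j
    by_contra hne
    have := congrFun (congrFun h (f j)) j
    simp [mono, hne] at this
  subst hfg
  refine ⟨rfl, ?_⟩
  ext j
  have := congrFun (congrFun h (f j)) j
  simpa [mono] using this

theorem mono_single (f : Fin 4 → Fin 4) (s : Fin 4 → ℤˣ) (j : Fin 4) :
    (mono f s).mulVec (Pi.single j 1) = ((s j : ℤ) : ℝ) • Pi.single (f j) 1 := by
  ext i
  simp [mono, Pi.single_apply]

theorem mono_transpose (f : Fin 4 → Fin 4) (s : Fin 4 → ℤˣ) (v : Fin 4 → ℝ) (j : Fin 4) :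
    (mono f s).transpose.mulVec v j = ((s j : ℤ) : ℝ) * v (f j) := by
  simp [mono, Matrix.mulVec, dotProduct]

theorem sgn_smul_mem (u : ℤˣ) (i : Fin 4) :
    ((u : ℤ) : ℝ) • (Pi.single i 1 : Fin 4 → ℝ) ∈ signedBasis := by
  rcases Int.units_eq_one_or u with h | h
  · exact ⟨i, Or.inl (by simp [h])⟩
  · exact ⟨i, Or.inr (by simp [h])⟩

theorem mem_signed (v : Fin 4 → ℝ) :
    v ∈ signedBasis ↔ ∃ i, ∃ u : ℤˣ, v = ((u : ℤ) : ℝ) • (Pi.single i 1 : Fin 4 → ℝ) := by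
  constructor
  · rintro ⟨i, h | h⟩
    · exact ⟨i, 1, by simp [h]⟩
    · exact ⟨i, -1, by simp [h]⟩
  · rintro ⟨i, u, rfl⟩
    exact sgn_smul_mem u i

/-- `f` is injective and respects the partition into blocks. -/
def blk (f : Fin 4 → Fin 4) : Prop :=
  (∀ i j, f i = f j → i = j) ∧ (f 0 < 2 ↔ f 1 < 2)

instance : DecidablePred blk := fun f => by unfold blk; infer_instance

theorem blk_cases : ∀ f : Fin 4 → Fin 4, blk f →
    (((f 0 = 0 ∧ f 1 = 1) ∨ (f 0 = 1 ∧ f 1 = 0)) ∧ ((f 2 = 2 ∧ f 3 = 3) ∨ (f 2 = 3 ∧ f 3 = 2))) ∨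
    (((f 0 = 2 ∧ f 1 = 3) ∨ (f 0 = 3 ∧ f 1 = 2)) ∧ ((f 2 = 0 ∧ f 3 = 1) ∨ (f 2 = 1 ∧ f 3 = 0))) := by
  decide +kernel

theorem blk_card : Fintype.card {f // blk f} = 8 := by
  decide +kernel

theorem wCond_of_blk (f : Fin 4 → Fin 4) (s : Fin 4 → ℤˣ) (hb : blk f)
    (A : O4) (hA : (A : Matrix (Fin 4) (Fin 4) ℝ) = mono f s) : wCond A := by
  have hinj : Function.Injective f := fun i j h => hb.1 i j h
  have hsurj : Function.Surjective f := Finite.surjective_of_injective hinj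
  constructor
  · ext v
    constructor
    · rintro ⟨w, hw, rfl⟩
      obtain ⟨i, u, rfl⟩ := (mem_signed w).1 hw
      refine (mem_signed _).2 ⟨f i, u * s i, ?_⟩
      simp only [hA]
      rw [Matrix.mulVec_smul, mono_single, smul_smul]
      push_cast
      rfl
    · intro hv
      obtain ⟨i, u, rfl⟩ := (mem_signed v).1 hv
      obtain ⟨j, rfl⟩ := hsurj i
      refine ⟨((u * s j : ℤˣ) : ℤ) • (Pi.single j 1 : Fin 4 → ℝ), ?_, ?_⟩
      · refine (mem_signed _).2 ⟨j, u * s j, ?_⟩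
        rw [Int.cast_smul_eq_zsmul]
      · simp only [hA]
        rw [← Int.cast_smul_eq_zsmul ℝ, Matrix.mulVec_smul, mono_single, smul_smul]
        push_cast
        rw [mul_assoc, sgn_sq, mul_one]
  · have h12 : ∀ v, v ∈ plane₁₂.map (Matrix.toLin' (A : Matrix (Fin 4) (Fin 4) ℝ)) ↔
        v (f 2) = 0 ∧ v (f 3) = 0 := by
      intro v
      rw [mem_map_iff, mem_plane₁₂, hA, mono_transpose, mono_transpose]
      simp [sgn_ne]
    have h34 : ∀ v, v ∈ plane₃₄.map (Matrix.toLin' (A : Matrix (Fin 4) (Fin 4) ℝ)) ↔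
        v (f 0) = 0 ∧ v (f 1) = 0 := by
      intro v
      rw [mem_map_iff, mem_plane₃₄, hA, mono_transpose, mono_transpose]
      simp [sgn_ne]
    rcases blk_cases f hb with ⟨h0, h2⟩ | ⟨h0, h2⟩
    · have e1 : plane₁₂.map (Matrix.toLin' (A : Matrix (Fin 4) (Fin 4) ℝ)) = plane₁₂ := by
        ext v
        rw [h12, mem_plane₁₂]
        rcases h2 with ⟨a, b⟩ | ⟨a, b⟩ <;> rw [a, b]
        exact and_comm
      have e2 : plane₃₄.map (Matrix.toLin' (A : Matrix (Fin 4) (Fin 4) ℝ)) = plane₃₄ := by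
        ext v
        rw [h34, mem_plane₃₄]
        rcases h0 with ⟨a, b⟩ | ⟨a, b⟩ <;> rw [a, b]
        exact and_comm
      rw [e1, e2]
    · have e1 : plane₁₂.map (Matrix.toLin' (A : Matrix (Fin 4) (Fin 4) ℝ)) = plane₃₄ := by
        ext v
        rw [h12, mem_plane₃₄]
        rcases h2 with ⟨a, b⟩ | ⟨a, b⟩ <;> rw [a, b]
        exact and_comm
      have e2 : plane₃₄.map (Matrix.toLin' (A : Matrix (Fin 4) (Fin 4) ℝ)) = plane₁₂ := by
        ext v
        rw [h34, mem_plane₁₂]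
        rcases h0 with ⟨a, b⟩ | ⟨a, b⟩ <;> rw [a, b]
        exact and_comm
      rw [e1, e2, Set.pair_comm]

theorem exists_of_wCond (A : O4) (h : wCond A) :
    ∃ f s, blk f ∧ (A : Matrix (Fin 4) (Fin 4) ℝ) = mono f s := by
  obtain ⟨h1, h2⟩ := h
  have key : ∀ j, ∃ i, ∃ u : ℤˣ, (A : Matrix (Fin 4) (Fin 4) ℝ).mulVec (Pi.single j 1) =
      ((u : ℤ) : ℝ) • (Pi.single i 1 : Fin 4 → ℝ) := by
    intro j
    rw [← mem_signed, ← h1]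
    exact ⟨_, ⟨j, Or.inl rfl⟩, rfl⟩
  choose f s hfs using key
  have hA : (A : Matrix (Fin 4) (Fin 4) ℝ) = mono f s := by
    ext i j
    have := congrFun (hfs j) i
    rw [← mono_single] at this
    simpa using this
  have hO := O4_transpose_mul A
  have hinj : ∀ i j, f i = f j → i = j := by
    intro i j hij
    by_contra hne
    have h3 := congrFun (congrFun hO i) j
    rw [Matrix.one_apply_ne hne, Matrix.mul_apply, hA] at h3
    simp [mono, hij] at h3
  refine ⟨f, s, ⟨hinj, ?_⟩, hA⟩
  have hm : ∀ j, (Pi.single j 1 : Fin 4 → ℝ) ∈ plane₁₂ →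
      (Pi.single (f j) 1 : Fin 4 → ℝ) ∈
        plane₁₂.map (Matrix.toLin' (A : Matrix (Fin 4) (Fin 4) ℝ)) := by
    intro j hj
    refine ⟨((s j : ℤ) : ℝ) • Pi.single j 1, Submodule.smul_mem _ _ hj, ?_⟩
    rw [Matrix.toLin'_apply, hA, Matrix.mulVec_smul, mono_single, smul_smul, sgn_sq, one_smul]
  have m0 := hm 0 (by rw [mem_plane₁₂]; simp)
  have m1 := hm 1 (by rw [mem_plane₁₂]; simp)
  have c12 : ∀ i : Fin 4, (Pi.single i 1 : Fin 4 → ℝ) ∈ plane₁₂ → i < 2 := by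
    intro i
    rw [mem_plane₁₂]
    fin_cases i <;> simp
  have c34 : ∀ i : Fin 4, (Pi.single i 1 : Fin 4 → ℝ) ∈ plane₃₄ → ¬ i < 2 := by
    intro i
    rw [mem_plane₃₄]
    fin_cases i <;> simp
  have hmem : plane₁₂.map (Matrix.toLin' (A : Matrix (Fin 4) (Fin 4) ℝ)) ∈
      ({plane₁₂, plane₃₄} : Set (Submodule ℝ (Fin 4 → ℝ))) := by
    rw [← h2]
    exact Or.inl rfl
  rcases hmem with e | e
  · rw [e] at m0 m1
    exact iff_of_true (c12 _ m0) (c12 _ m1)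
  · rw [e] at m0 m1
    exact iff_of_false (c34 _ m0) (c34 _ m1)

theorem wCond_iff (A : O4) : wCond A ↔
    ∃ f s, blk f ∧ (A : Matrix (Fin 4) (Fin 4) ℝ) = mono f s :=
  ⟨exists_of_wCond A, fun ⟨f, s, hb, hA⟩ => wCond_of_blk f s hb A hA⟩

theorem wCond_one : wCond 1 := by
  constructor
  · simp
  · simp

theorem pair_image (A : O4) :
    ({plane₁₂.map (Matrix.toLin' (A : Matrix (Fin 4) (Fin 4) ℝ)),
      plane₃₄.map (Matrix.toLin' (A : Matrix (Fin 4) (Fin 4) ℝ))} :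
        Set (Submodule ℝ (Fin 4 → ℝ))) =
    (fun P => P.map (Matrix.toLin' (A : Matrix (Fin 4) (Fin 4) ℝ))) '' {plane₁₂, plane₃₄} := by
  rw [Set.image_pair]

theorem wCond_mul (A B : O4) (hA : wCond A) (hB : wCond B) : wCond (A * B) := by
  unfold wCond at *
  rw [pair_image] at *
  obtain ⟨a1, a2⟩ := hA
  obtain ⟨b1, b2⟩ := hB
  constructor
  · conv_rhs => rw [← a1, ← b1, Set.image_image]
    simp [Matrix.mulVec_mulVec]
  · conv_rhs => rw [← a2, ← b2, Set.image_image]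
    simp only [Submonoid.coe_mul, Matrix.toLin'_mul, Submodule.map_comp]

theorem wCond_inv (A : O4) (hA : wCond A) : wCond A⁻¹ := by
  have hinv : ((A⁻¹ : O4) : Matrix (Fin 4) (Fin 4) ℝ) * (A : Matrix (Fin 4) (Fin 4) ℝ) = 1 := by
    rw [← Submonoid.coe_mul, inv_mul_cancel]
    rfl
  unfold wCond at *
  rw [pair_image] at *
  obtain ⟨a1, a2⟩ := hA
  constructor
  · conv_lhs => rw [← a1, Set.image_image]
    simp only [Matrix.mulVec_mulVec, hinv]
    simp
  · conv_lhs => rw [← a2, Set.image_image]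
    simp only [← Submodule.map_comp, ← Matrix.toLin'_mul, hinv]
    simp

/-- The group `W`. -/
def Wgrp : Subgroup O4 where
  carrier := {A | wCond A}
  mul_mem' := fun {a b} ha hb => wCond_mul a b ha hb
  one_mem' := wCond_one
  inv_mem' := fun {a} ha => wCond_inv a ha

theorem card_W : Nat.card Wgrp = 128 := by
  let F : {f // blk f} × (Fin 4 → ℤˣ) → Wgrp := fun p =>
    ⟨⟨mono p.1.1 p.2, mono_orth _ _ (fun i j h => p.1.2.1 i j h)⟩,
      wCond_of_blk p.1.1 p.2 p.1.2 _ rfl⟩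
  have hF : Function.Bijective F := by
    constructor
    · rintro ⟨⟨f, hf⟩, s⟩ ⟨⟨g, hg⟩, t⟩ h
      have h' : mono f s = mono g t := congrArg (fun x : Wgrp => x.1.1) h
      obtain ⟨rfl, rfl⟩ := mono_inj h'
      rfl
    · rintro ⟨A, hA⟩
      obtain ⟨f, s, hb, h⟩ := exists_of_wCond A hA
      exact ⟨(⟨f, hb⟩, s), Subtype.ext (Subtype.ext h.symm)⟩
  rw [← Nat.card_eq_of_bijective F hF, Nat.card_prod, Nat.card_eq_fintype_card, blk_card,
    Nat.card_eq_fintype_card]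
  simp

theorem R₁_eq : R₁ = mono ![1, 0, 2, 3] ![1, -1, 1, 1] := by
  ext i j
  fin_cases i <;> fin_cases j <;> simp [R₁, mono]

theorem R₂_eq : R₂ = mono ![0, 1, 3, 2] ![1, 1, 1, -1] := by
  ext i j
  fin_cases i <;> fin_cases j <;> simp [R₂, mono]

theorem Tm_eq : Tm = mono ![2, 3, 0, 1] ![1, 1, 1, 1] := by
  ext i j
  fin_cases i <;> fin_cases j <;> simp [Tm, mono]

def Z₁ : Matrix (Fin 4) (Fin 4) ℤ :=
  !![0, -1, 0, 0; 1, 0, 0, 0; 0, 0, 1, 0; 0, 0, 0, 1]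

def Z₂ : Matrix (Fin 4) (Fin 4) ℤ :=
  !![1, 0, 0, 0; 0, 1, 0, 0; 0, 0, 0, -1; 0, 0, 1, 0]

def ZT : Matrix (Fin 4) (Fin 4) ℤ :=
  !![0, 0, 1, 0; 0, 0, 0, 1; 1, 0, 0, 0; 0, 1, 0, 0]

def castM : Matrix (Fin 4) (Fin 4) ℤ →+* Matrix (Fin 4) (Fin 4) ℝ :=
  (Int.castRingHom ℝ).mapMatrix

theorem castM_inj : Function.Injective castM := by
  intro A B h
  ext i j
  have := congrFun (congrFun h i) j
  simpa [castM] using this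

theorem castM_Z₁ : castM Z₁ = R₁ := by
  ext i j
  fin_cases i <;> fin_cases j <;> simp [R₁, Z₁, castM]

theorem castM_Z₂ : castM Z₂ = R₂ := by
  ext i j
  fin_cases i <;> fin_cases j <;> simp [R₂, Z₂, castM]

theorem castM_ZT : castM ZT = Tm := by
  ext i j
  fin_cases i <;> fin_cases j <;> simp [Tm, ZT, castM]

def zword (p : Fin 4 × Fin 4 × Fin 2) : Matrix (Fin 4) (Fin 4) ℤ :=
  Z₁ ^ (p.1 : ℕ) * Z₂ ^ (p.2.1 : ℕ) * ZT ^ (p.2.2 : ℕ)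

theorem zword_inj : Function.Injective zword := by
  have : ∀ p q, zword p = zword q → p = q := by
    decide +kernel
  exact fun p q h => this p q h

theorem closure_card {G : Type*} [Group G] (a b t : G) (ha : a ^ 4 = 1) (hb : b ^ 4 = 1)
    (ht : t ^ 2 = 1) (hab : b * a = a * b) (hta : t * a = b * t) (htb : t * b = a * t)
    (hinj : Function.Injective
      (fun p : Fin 4 × Fin 4 × Fin 2 => a ^ (p.1 : ℕ) * b ^ (p.2.1 : ℕ) * t ^ (p.2.2 : ℕ))) :
    Nat.card (Subgroup.closure ({a, b, t} : Set G)) = 32 := by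
  have hmod : ∀ i j k : ℕ, a ^ i * b ^ j * t ^ k ∈ Set.range
      (fun p : Fin 4 × Fin 4 × Fin 2 => a ^ (p.1 : ℕ) * b ^ (p.2.1 : ℕ) * t ^ (p.2.2 : ℕ)) := by
    intro i j k
    refine ⟨(⟨i % 4, Nat.mod_lt _ (by norm_num)⟩, ⟨j % 4, Nat.mod_lt _ (by norm_num)⟩,
      ⟨k % 2, Nat.mod_lt _ (by norm_num)⟩), ?_⟩
    simp only
    rw [← pow_eq_pow_mod i ha, ← pow_eq_pow_mod j hb, ← pow_eq_pow_mod k ht]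
  have hba : ∀ i, b * a ^ i = a ^ i * b := fun i => (Commute.pow_right (show Commute b a from hab) i)
  have hta' : ∀ i, t * a ^ i = b ^ i * t := fun i => SemiconjBy.pow_right (show SemiconjBy t a b from hta) i
  have htb' : ∀ i, t * b ^ i = a ^ i * t := fun i => SemiconjBy.pow_right (show SemiconjBy t b a from htb) i
  have hab' : ∀ i j, b ^ i * a ^ j = a ^ j * b ^ i := fun i j =>
    (Commute.pow_pow (show Commute b a from hab) i j)
  have sa : ∀ i j k : ℕ, a * (a ^ i * b ^ j * t ^ k) = a ^ (i + 1) * b ^ j * t ^ k := by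
    intro i j k
    rw [pow_succ' a i]
    simp only [mul_assoc]
  have sb : ∀ i j k : ℕ, b * (a ^ i * b ^ j * t ^ k) = a ^ i * b ^ (j + 1) * t ^ k := by
    intro i j k
    rw [pow_succ' b j, ← mul_assoc, ← mul_assoc, hba]
    simp only [mul_assoc]
  have st : ∀ i j k : ℕ, t * (a ^ i * b ^ j * t ^ k) = a ^ j * b ^ i * t ^ (k + 1) := by
    intro i j k
    rw [pow_succ' t k, ← mul_assoc, ← mul_assoc, hta', mul_assoc (b ^ i), htb', ← mul_assoc, hab']
    simp only [mul_assoc]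
  have ia : a⁻¹ = a ^ 3 := by
    rw [inv_eq_iff_mul_eq_one, ← pow_succ', ha]
  have ib : b⁻¹ = b ^ 3 := by
    rw [inv_eq_iff_mul_eq_one, ← pow_succ', hb]
  have it : t⁻¹ = t := by
    rw [inv_eq_iff_mul_eq_one, ← pow_two, ht]
  have hset : (Subgroup.closure ({a, b, t} : Set G) : Set G) = Set.range
      (fun p : Fin 4 × Fin 4 × Fin 2 => a ^ (p.1 : ℕ) * b ^ (p.2.1 : ℕ) * t ^ (p.2.2 : ℕ)) := by
    apply Set.Subset.antisymm
    · intro x hx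
      induction hx using Subgroup.closure_induction_left with
      | one => simpa using hmod 0 0 0
      | mul_left x hx y hy ih =>
        obtain ⟨p, rfl⟩ := ih
        rcases hx with rfl | rfl | rfl
        · simp only [sa]; exact hmod _ _ _
        · simp only [sb]; exact hmod _ _ _
        · simp only [st]; exact hmod _ _ _
      | inv_mul_cancel x hx y hy ih =>
        obtain ⟨p, rfl⟩ := ih
        rcases hx with rfl | rfl | rfl
        · rw [ia]; simp only [pow_succ' _ 2, pow_two, mul_assoc _ _ (_ * _ * _), sa]; exact hmod _ _ _
        · rw [ib]; simp only [pow_succ' _ 2, pow_two, mul_assoc _ _ (_ * _ * _), sb]; exact hmod _ _ _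
        · rw [it]; simp only [st]; exact hmod _ _ _
    · rintro _ ⟨p, rfl⟩
      have m : ∀ x ∈ ({a, b, t} : Set G), x ∈ Subgroup.closure ({a, b, t} : Set G) :=
        fun x hx => Subgroup.subset_closure hx
      exact mul_mem (mul_mem (pow_mem (m a (by simp)) _) (pow_mem (m b (by simp)) _))
        (pow_mem (m t (by simp)) _)
  have : Nat.card (Subgroup.closure ({a, b, t} : Set G)) =
      Nat.card ((Subgroup.closure ({a, b, t} : Set G) : Set G)) := rfl
  rw [this, hset, Nat.card_range_of_injective hinj]
  simp

/-- The set `W` of orthogonal matrices permuting the signed basis vectors and preserving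
the unordered pair of coordinate planes is a subgroup of `O(4,ℝ)` of order 128 containing
the group `H` generated by `R₁, R₂, T`, and `H` has index 4 in `W`. -/
theorem stmt_8 :
    ∃ W : Subgroup (Matrix.orthogonalGroup (Fin 4) ℝ),
      (W : Set (Matrix.orthogonalGroup (Fin 4) ℝ)) = {A | wCond A} ∧
      Nat.card W = 128 ∧
      ∃ (h₁ : R₁ ∈ Matrix.orthogonalGroup (Fin 4) ℝ)
        (h₂ : R₂ ∈ Matrix.orthogonalGroup (Fin 4) ℝ)
        (hT : Tm ∈ Matrix.orthogonalGroup (Fin 4) ℝ),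
        Subgroup.closure
          ({⟨R₁, h₁⟩, ⟨R₂, h₂⟩, ⟨Tm, hT⟩} : Set (Matrix.orthogonalGroup (Fin 4) ℝ)) ≤ W ∧
        ((Subgroup.closure
          ({⟨R₁, h₁⟩, ⟨R₂, h₂⟩, ⟨Tm, hT⟩} :
            Set (Matrix.orthogonalGroup (Fin 4) ℝ))).subgroupOf W).index = 4 := by
  have b1 : blk ![1, 0, 2, 3] := by decide
  have b2 : blk ![0, 1, 3, 2] := by decide
  have b3 : blk ![2, 3, 0, 1] := by decide
  have h₁ : R₁ ∈ Matrix.orthogonalGroup (Fin 4) ℝ := by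
    rw [R₁_eq]
    exact mono_orth _ _ (fun i j h => b1.1 i j h)
  have h₂ : R₂ ∈ Matrix.orthogonalGroup (Fin 4) ℝ := by
    rw [R₂_eq]
    exact mono_orth _ _ (fun i j h => b2.1 i j h)
  have hT : Tm ∈ Matrix.orthogonalGroup (Fin 4) ℝ := by
    rw [Tm_eq]
    exact mono_orth _ _ (fun i j h => b3.1 i j h)
  have hle : Subgroup.closure ({⟨R₁, h₁⟩, ⟨R₂, h₂⟩, ⟨Tm, hT⟩} : Set O4) ≤ Wgrp := by
    rw [Subgroup.closure_le]
    rintro x (rfl | rfl | rfl)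
    · exact wCond_of_blk _ _ b1 _ R₁_eq
    · exact wCond_of_blk _ _ b2 _ R₂_eq
    · exact wCond_of_blk _ _ b3 _ Tm_eq
  refine ⟨Wgrp, rfl, card_W, h₁, h₂, hT, hle, ?_⟩
  have lift : ∀ (x y : O4) (X Y : Matrix (Fin 4) (Fin 4) ℤ),
      (x : Matrix (Fin 4) (Fin 4) ℝ) = castM X → (y : Matrix (Fin 4) (Fin 4) ℝ) = castM Y →
      X = Y → x = y := by
    intro x y X Y hx hy h
    apply Subtype.ext
    rw [hx, hy, h]
  have hcard : Nat.card (Subgroup.closure ({⟨R₁, h₁⟩, ⟨R₂, h₂⟩, ⟨Tm, hT⟩} : Set O4)) = 32 := by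
    apply closure_card
    · exact lift _ _ (Z₁ ^ 4) 1 (by simp [castM_Z₁]) (by simp) (by decide +kernel)
    · exact lift _ _ (Z₂ ^ 4) 1 (by simp [castM_Z₂]) (by simp) (by decide +kernel)
    · exact lift _ _ (ZT ^ 2) 1 (by simp [castM_ZT]) (by simp) (by decide +kernel)
    · exact lift _ _ (Z₂ * Z₁) (Z₁ * Z₂) (by simp [castM_Z₁, castM_Z₂])
        (by simp [castM_Z₁, castM_Z₂]) (by decide +kernel)
    · exact lift _ _ (ZT * Z₁) (Z₂ * ZT) (by simp [castM_Z₁, castM_ZT])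
        (by simp [castM_Z₂, castM_ZT]) (by decide +kernel)
    · exact lift _ _ (ZT * Z₂) (Z₁ * ZT) (by simp [castM_Z₂, castM_ZT])
        (by simp [castM_Z₁, castM_ZT]) (by decide +kernel)
    · intro p q h
      apply zword_inj
      apply castM_inj
      have h' := congrArg (fun x : O4 => (x : Matrix (Fin 4) (Fin 4) ℝ)) h
      simpa [zword, castM_Z₁, castM_Z₂, castM_ZT] using h'
  have hmul := Subgroup.card_mul_index
    ((Subgroup.closure ({⟨R₁, h₁⟩, ⟨R₂, h₂⟩, ⟨Tm, hT⟩} : Set O4)).subgroupOf Wgrp)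
  rw [card_W, Nat.card_congr (Subgroup.subgroupOfEquivOfLe hle).toEquiv, hcard] at hmul
  exact Nat.eq_of_mul_eq_mul_left (by norm_num : 0 < 32) hmul
end

section
/- The fourth cohomology group of the quaternion group Q₈ of order 8 with coefficients in ℤ with the trivial action, H⁴(Q₈; ℤ), is a cyclic group of order 8, i.e., it is isomorphic as an abelian group to ℤ/8. -/
open CategoryTheory CategoryTheory.Limits QuaternionGroup

namespace Q8Coh

/-- Notation for the quaternion group of order 8. -/
abbrev Q : Type := QuaternionGroup 2

lemma forall_Q {P : Q → Prop} (h0 : P (a 0)) (h1 : P (a 1)) (h2 : P (a 2)) (h3 : P (a 3))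
    (k0 : P (xa 0)) (k1 : P (xa 1)) (k2 : P (xa 2)) (k3 : P (xa 3)) : ∀ h, P h := by
  rintro (i | i)
  · change Fin 4 at i
    fin_cases i <;> assumption
  · change Fin 4 at i
    fin_cases i <;> assumption

/-- A function on `Q` from its eight values. -/
def mk8 {A : Type} (v w : Fin 4 → A) : Q → A
  | a i => v i
  | xa i => w i

/-- The representation of `Q` on functions `Q → A` by right translation. -/
noncomputable def funRho (A : Type) [AddCommGroup A] : Representation ℤ Q (Q → A) where
  toFun g := LinearMap.funLeft ℤ A (· * g)
  map_one' := by ext; simp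
  map_mul' _ _ := by ext; simp [mul_assoc]

@[simp] lemma funRho_apply (A : Type) [AddCommGroup A] (g : Q) (f : Q → A) (h : Q) :
    funRho A g f h = f (h * g) := rfl

/-- The functions `Q → A` as an object of `Rep`. -/
noncomputable abbrev F (A : Type) [AddCommGroup A] : Rep ℤ Q := Rep.of (funRho A)

noncomputable def isoCoind (A : Type) [AddCommGroup A] :
    F A ≅ Rep.coind (⊥ : Subgroup Q).subtype (Rep.trivial ℤ (⊥ : Subgroup Q) A) :=
  Rep.mkIso <| .mk
    { toFun := fun f => ⟨f, fun g h => by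
        obtain ⟨g, hg⟩ := g
        obtain rfl := Subgroup.mem_bot.1 hg
        simp⟩
      map_add' := fun _ _ => rfl
      map_smul' := fun _ _ => rfl
      invFun := fun f => f.1
      left_inv := fun _ => rfl
      right_inv := fun _ => rfl } (fun g => by ext; rfl)

lemma isZero_F (A : Type) [AddCommGroup A] (n : ℕ) : IsZero (groupCohomology (F A) (n + 1)) := by
  have h := isZero_groupCohomology_succ_of_subsingleton
    (Rep.trivial ℤ (⊥ : Subgroup Q) A) n
  have e := (groupCohomology.functor ℤ Q (n + 1)).mapIso (isoCoind A)
  exact (h.of_iso (groupCohomology.coindIso _ _)).of_iso e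

/-- `(x - 1, y - 1)`. -/
noncomputable def l1 : (Q → ℤ) →ₗ[ℤ] (Q → ℤ × ℤ) where
  toFun f h := (f (a 3 * h) - f h, f (xa 2 * h) - f h)
  map_add' f g := by ext h <;> simp <;> ring
  map_smul' r f := by ext h <;> simp <;> ring

noncomputable def l2 : (Q → ℤ × ℤ) →ₗ[ℤ] (Q → ℤ × ℤ) where
  toFun f h := ((f h).1 + (f (a 3 * h)).1 - (f h).2 - (f (xa 2 * h)).2,
    (f h).1 + (f (xa 1 * h)).1 + (f (a 3 * h)).2 - (f h).2)
  map_add' f g := by ext h <;> simp <;> ring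
  map_smul' r f := by ext h <;> simp <;> ring

noncomputable def l3 : (Q → ℤ × ℤ) →ₗ[ℤ] (Q → ℤ) where
  toFun f h := (f (a 3 * h)).1 - (f h).1 + (f h).2 - (f (xa 1 * h)).2
  map_add' f g := by ext h; simp; ring
  map_smul' r f := by ext h; simp; ring

noncomputable def l4 : (Q → ℤ) →ₗ[ℤ] ℤ where
  toFun f := f (a 0) + f (a 1) + f (a 2) + f (a 3) + f (xa 0) + f (xa 1) + f (xa 2) + f (xa 3)
  map_add' f g := by simp; ring
  map_smul' r f := by simp; ring

noncomputable def l0 : ℤ →ₗ[ℤ] (Q → ℤ) where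
  toFun n _ := n
  map_add' _ _ := rfl
  map_smul' _ _ := rfl

lemma tab :
    ((a 3 * a 0 : Q) = a 3) ∧ ((a 3 * a 1 : Q) = a 0) ∧ ((a 3 * a 2 : Q) = a 1) ∧
    ((a 3 * a 3 : Q) = a 2) ∧ ((a 3 * xa 0 : Q) = xa 1) ∧ ((a 3 * xa 1 : Q) = xa 2) ∧
    ((a 3 * xa 2 : Q) = xa 3) ∧ ((a 3 * xa 3 : Q) = xa 0) ∧
    ((xa 2 * a 0 : Q) = xa 2) ∧ ((xa 2 * a 1 : Q) = xa 3) ∧ ((xa 2 * a 2 : Q) = xa 0) ∧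
    ((xa 2 * a 3 : Q) = xa 1) ∧ ((xa 2 * xa 0 : Q) = a 0) ∧ ((xa 2 * xa 1 : Q) = a 1) ∧
    ((xa 2 * xa 2 : Q) = a 2) ∧ ((xa 2 * xa 3 : Q) = a 3) ∧
    ((xa 1 * a 0 : Q) = xa 1) ∧ ((xa 1 * a 1 : Q) = xa 2) ∧ ((xa 1 * a 2 : Q) = xa 3) ∧
    ((xa 1 * a 3 : Q) = xa 0) ∧ ((xa 1 * xa 0 : Q) = a 1) ∧ ((xa 1 * xa 1 : Q) = a 2) ∧
    ((xa 1 * xa 2 : Q) = a 3) ∧ ((xa 1 * xa 3 : Q) = a 0) := by decide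

lemma mk8_vals {A : Type} (v w : Fin 4 → A) :
    mk8 v w (a 0) = v 0 ∧ mk8 v w (a 1) = v 1 ∧ mk8 v w (a 2) = v 2 ∧ mk8 v w (a 3) = v 3 ∧
    mk8 v w (xa 0) = w 0 ∧ mk8 v w (xa 1) = w 1 ∧ mk8 v w (xa 2) = w 2 ∧ mk8 v w (xa 3) = w 3 :=
  ⟨rfl, rfl, rfl, rfl, rfl, rfl, rfl, rfl⟩

lemma l1_l0 (n : ℤ) : l1 (l0 n) = 0 := by
  ext h <;> simp [l1, l0]

lemma l2_l1 (f : Q → ℤ) : l2 (l1 f) = 0 := by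
  refine funext (forall_Q ?_ ?_ ?_ ?_ ?_ ?_ ?_ ?_) <;>
  · simp only [l1, l2, LinearMap.coe_mk, AddHom.coe_mk, tab, Pi.zero_apply, Prod.ext_iff,
      Prod.fst_zero, Prod.snd_zero]
    constructor <;> ring

lemma l3_l2 (f : Q → ℤ × ℤ) : l3 (l2 f) = 0 := by
  refine funext (forall_Q ?_ ?_ ?_ ?_ ?_ ?_ ?_ ?_) <;>
  · simp only [l3, l2, LinearMap.coe_mk, AddHom.coe_mk, tab, Pi.zero_apply]
    ring

lemma l4_l3 (f : Q → ℤ × ℤ) : l4 (l3 f) = 0 := by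
  simp only [l3, l4, LinearMap.coe_mk, AddHom.coe_mk, tab]
  ring

lemma ex0 (f : Q → ℤ) (hf : l1 f = 0) : ∃ n, l0 n = f := by
  have H := fun h => congrFun hf h
  simp only [l1, LinearMap.coe_mk, AddHom.coe_mk, Pi.zero_apply, Prod.ext_iff,
      Prod.fst_zero, Prod.snd_zero] at H
  have e0 := H (a 0); have e1 := H (a 1); have e2 := H (a 2); have e3 := H (a 3)
  have k0 := H (xa 0); have k1 := H (xa 1); have k2 := H (xa 2); have k3 := H (xa 3)
  simp only [tab] at e0 e1 e2 e3 k0 k1 k2 k3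
  refine ⟨f (a 0), funext (forall_Q ?_ ?_ ?_ ?_ ?_ ?_ ?_ ?_)⟩ <;>
  · simp only [l0, LinearMap.coe_mk, AddHom.coe_mk]
    try omega

lemma ex1 (z : Q → ℤ × ℤ) (hz : l2 z = 0) : ∃ f, l1 f = z := by
  have H := fun h => congrFun hz h
  simp only [l2, LinearMap.coe_mk, AddHom.coe_mk, Pi.zero_apply, Prod.ext_iff,
      Prod.fst_zero, Prod.snd_zero] at H
  have e0 := H (a 0); have e1 := H (a 1); have e2 := H (a 2); have e3 := H (a 3)
  have k0 := H (xa 0); have k1 := H (xa 1); have k2 := H (xa 2); have k3 := H (xa 3)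
  clear H hz
  simp only [tab] at e0 e1 e2 e3 k0 k1 k2 k3
  refine ⟨mk8 ![(z (a 1)).1 + (z (xa 1)).2, (z (xa 1)).2, -(z (xa 0)).1 - (z (a 2)).2,
      -(z (a 3)).2] ![-(z (xa 0)).1, 0, (z (xa 1)).1, (z (a 1)).2 + (z (xa 1)).2],
      funext (forall_Q ?_ ?_ ?_ ?_ ?_ ?_ ?_ ?_)⟩ <;>
  · simp only [l1, LinearMap.coe_mk, AddHom.coe_mk, tab, mk8_vals, Prod.ext_iff]
    simp only [Matrix.cons_val]
    constructor <;> linarith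

lemma ex2 (z : Q → ℤ × ℤ) (hz : l3 z = 0) : ∃ f, l2 f = z := by
  have H := fun h => congrFun hz h
  simp only [l3, LinearMap.coe_mk, AddHom.coe_mk, Pi.zero_apply] at H
  have e0 := H (a 0); have e1 := H (a 1); have e2 := H (a 2); have e3 := H (a 3)
  have k0 := H (xa 0); have k1 := H (xa 1); have k2 := H (xa 2); have k3 := H (xa 3)
  clear H hz
  simp only [tab] at e0 e1 e2 e3 k0 k1 k2 k3
  refine ⟨mk8 ![(-(z (xa 3)).1 + (z (a 3)).2 + (z (xa 3)).2,
        -(z (a 2)).1 - (z (xa 1)).1 + (z (a 1)).2 + (z (xa 1)).2),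
      ((z (a 2)).1, (z (a 2)).2), (0, 0), (0, 0)]
      ![((z (a 3)).2, 0), (-(z (a 3)).1 + (z (xa 1)).2, -(z (a 3)).1),
        ((z (xa 1)).1 + (z (a 2)).2 - (z (xa 1)).2, 0),
        (0, -(z (xa 3)).1 + (z (a 3)).2)],
      funext (forall_Q ?_ ?_ ?_ ?_ ?_ ?_ ?_ ?_)⟩ <;>
  · simp only [l2, LinearMap.coe_mk, AddHom.coe_mk, tab, mk8_vals, Prod.ext_iff]
    simp only [Matrix.cons_val]
    constructor <;> linarith

lemma ex3 (z : Q → ℤ) (hz : l4 z = 0) : ∃ f, l3 f = z := by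
  simp only [l4, LinearMap.coe_mk, AddHom.coe_mk] at hz
  refine ⟨mk8 ![(0, 0), (- z (a 1), 0), (0, z (a 1) + z (a 2) + z (xa 3)), (0, 0)]
      ![(0, - z (a 3)), (z (a 3) + z (xa 0), - z (a 0)), (- z (xa 2), 0), (0, z (xa 3))],
      funext (forall_Q ?_ ?_ ?_ ?_ ?_ ?_ ?_ ?_)⟩ <;>
  · simp only [l3, LinearMap.coe_mk, AddHom.coe_mk, tab, mk8_vals]
    simp only [Matrix.cons_val]
    linarith

noncomputable abbrev Z : Rep ℤ Q := Rep.trivial ℤ Q ℤ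

noncomputable def d0 : Z ⟶ F ℤ := Rep.ofHom ⟨l0, fun g => by ext; rfl⟩
noncomputable def d1 : F ℤ ⟶ F (ℤ × ℤ) :=
  Rep.ofHom ⟨l1, fun g => LinearMap.ext fun f => funext fun h => by simp [l1, mul_assoc]⟩
noncomputable def d2 : F (ℤ × ℤ) ⟶ F (ℤ × ℤ) :=
  Rep.ofHom ⟨l2, fun g => LinearMap.ext fun f => funext fun h => by simp [l2, mul_assoc]⟩
noncomputable def d3 : F (ℤ × ℤ) ⟶ F ℤ :=
  Rep.ofHom ⟨l3, fun g => LinearMap.ext fun f => funext fun h => by simp [l3, mul_assoc]⟩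

lemma l4_eq (f : Q → ℤ) : l4 f = ∑ h, f h := by
  have : (Finset.univ : Finset Q) = {a 0, a 1, a 2, a 3, xa 0, xa 1, xa 2, xa 3} := by decide
  rw [this]
  repeat rw [Finset.sum_insert (by decide)]
  simp [l4]; ring

noncomputable def d4 : F ℤ ⟶ Z :=
  Rep.ofHom ⟨l4, fun g => LinearMap.ext fun f => by
    simpa [l4_eq] using Fintype.sum_equiv (Equiv.mulRight g) _ _ (fun _ => rfl)⟩

lemma exact_of {k G : Type} [CommRing k] [Group G] {A B C : Rep.{0} k G} (f : A ⟶ B) (g : B ⟶ C) (w : f ≫ g = 0)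
    (h : ∀ b : B, g.hom b = 0 → ∃ a : A, f.hom a = b) : (ShortComplex.mk f g w).Exact := by
  apply (forget₂ _ (ModuleCat k)).reflects_exact_of_faithful
  rw [ShortComplex.moduleCat_exact_iff]
  exact h

lemma w01 : d0 ≫ d1 = 0 := Rep.hom_ext (DFunLike.ext _ _ l1_l0)
lemma w12 : d1 ≫ d2 = 0 := Rep.hom_ext (DFunLike.ext _ _ l2_l1)
lemma w23 : d2 ≫ d3 = 0 := Rep.hom_ext (DFunLike.ext _ _ l3_l2)
lemma w34 : d3 ≫ d4 = 0 := Rep.hom_ext (DFunLike.ext _ _ l4_l3)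

lemma shortExact_of {K A B C : Rep.{0} ℤ Q} (i : K ⟶ A) (f : A ⟶ B) (g : B ⟶ C) [Mono i]
    (w : i ≫ f = 0) (w' : f ≫ g = 0) (h : (ShortComplex.mk i f w).Exact)
    (h' : (ShortComplex.mk f g w').Exact) :
    (ShortComplex.mk i (kernel.lift g f w') (by
      rw [← cancel_mono (kernel.ι g)]; simpa using w)).ShortExact := by
  have hm : Mono (ShortComplex.mk i (kernel.lift g f w') (by
      rw [← cancel_mono (kernel.ι g)]; simpa using w)).f := ‹_›
  refine { exact := ?_, mono_f := hm, epi_g := ?_ }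
  · let φ : ShortComplex.mk i (kernel.lift g f w') (by
      rw [← cancel_mono (kernel.ι g)]; simpa using w) ⟶ ShortComplex.mk i f w :=
      { τ₁ := 𝟙 _, τ₂ := 𝟙 _, τ₃ := kernel.ι g }
    have : Epi φ.τ₁ := by dsimp [φ]; infer_instance
    have : IsIso φ.τ₂ := by dsimp [φ]; infer_instance
    have : Mono φ.τ₃ := by dsimp [φ]; infer_instance
    exact (ShortComplex.exact_iff_of_epi_of_isIso_of_mono φ).2 h
  · exact h'.epi_kernelLift

instance : Mono d0 := (Rep.mono_iff_injective _).2 fun _ _ h => congrFun h (a 0)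

noncomputable def shift {K A L : Rep.{0} ℤ Q} {i : K ⟶ A} {p : A ⟶ L} {w : i ≫ p = 0}
    (h : (ShortComplex.mk i p w).ShortExact) (hA : ∀ n, IsZero (groupCohomology A (n + 1)))
    (n : ℕ) : groupCohomology L (n + 1) ≅ groupCohomology K (n + 2) :=
  haveI := groupCohomology.isIso_δ_of_isZero h (n + 1) (hA n) (hA (n + 1))
  asIso (groupCohomology.δ h (n + 1) (n + 2) rfl)

noncomputable def isoH1 : groupCohomology (kernel d4) 1 ≅ groupCohomology Z 4 :=
  shift (shortExact_of (kernel.ι d3) d3 d4 (by simp) w34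
      (ShortComplex.exact_kernel d3) (exact_of _ _ _ ex3)) (isZero_F _) 0 ≪≫
  shift (shortExact_of (kernel.ι d2) d2 d3 (by simp) w23
      (ShortComplex.exact_kernel d2) (exact_of _ _ _ ex2)) (isZero_F _) 1 ≪≫
  shift (shortExact_of d0 d1 d2 w01 w12 (exact_of _ _ _ ex0) (exact_of _ _ _ ex1)) (isZero_F _) 2

lemma sE4 : (ShortComplex.mk (kernel.ι d4) d4 (by simp)).ShortExact :=
  haveI : Epi d4 := (Rep.epi_iff_surjective _).2 fun n => ⟨mk8 ![n, 0, 0, 0] ![0, 0, 0, 0], by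
    change l4 _ = n
    simp only [l4, LinearMap.coe_mk, AddHom.coe_mk, mk8_vals]
    simp⟩
  { exact := ShortComplex.exact_kernel d4
    mono_f := by dsimp; infer_instance
    epi_g := by dsimp; infer_instance }

/-- The map `ℤ → H¹(ker d4)`. -/
noncomputable def φ : ModuleCat.of ℤ ℤ ⟶ groupCohomology (kernel d4) 1 :=
  (groupCohomology.H0IsoOfIsTrivial Z).inv ≫ groupCohomology.δ sE4 0 1 rfl

lemma φ_surj : Function.Surjective φ.hom := by
  have : Epi (groupCohomology.δ sE4 0 1 rfl) :=
    groupCohomology.epi_δ_of_isZero sE4 0 (isZero_F _ 0)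
  have : Epi φ := by unfold φ; infer_instance
  exact (ModuleCat.epi_iff_surjective φ).1 this

lemma H0map (f : (F ℤ).ρ.invariants) :
    (groupCohomology.H0IsoOfIsTrivial Z).hom
      (groupCohomology.map (MonoidHom.id Q) d4 0 ((groupCohomology.H0Iso (F ℤ)).inv f)) =
      l4 f.1 := by
  have h := congr($(groupCohomology.map_H0Iso_hom_f (MonoidHom.id Q) d4)
    ((groupCohomology.H0Iso (F ℤ)).inv f))
  refine Eq.trans h ?_
  change d4.hom ((groupCohomology.shortComplexH0 (F ℤ)).f
    ((groupCohomology.H0Iso (F ℤ)).hom ((groupCohomology.H0Iso (F ℤ)).inv f))) = _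
  rw [Iso.inv_hom_id_apply]
  rfl

lemma φ_ker (n : ℤ) : φ.hom n = 0 ↔ ∃ m : ℤ, n = 8 * m := by
  have hex := groupCohomology.mapShortComplex₃_exact sE4 (i := 0) (j := 1) rfl
  rw [ShortComplex.moduleCat_exact_iff] at hex
  have hz : ∀ x, groupCohomology.δ sE4 0 1 rfl (groupCohomology.map (MonoidHom.id Q) d4 0 x) = 0 :=
    fun x => congr($((groupCohomology.mapShortComplex₃ sE4 (i := 0) (j := 1) rfl).zero) x)
  constructor
  · intro h
    obtain ⟨x, hx⟩ := hex ((groupCohomology.H0IsoOfIsTrivial Z).inv n) h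
    change groupCohomology.map (MonoidHom.id Q) d4 0 x = _ at hx
    induction x using groupCohomology.H0_induction_on with | h f =>
    have h1 := H0map f
    rw [hx] at h1
    have h2 : n = l4 f.1 := by
      rwa [Iso.inv_hom_id_apply] at h1
    have h3 : ∀ g, f.1 g = f.1 1 := fun g => by
      simpa using congrFun (f.2 g) 1
    refine ⟨f.1 1, ?_⟩
    rw [h2]
    simp only [l4, LinearMap.coe_mk, AddHom.coe_mk]
    rw [h3 (a 0), h3 (a 1), h3 (a 2), h3 (a 3), h3 (xa 0), h3 (xa 1), h3 (xa 2), h3 (xa 3)]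
    ring
  · rintro ⟨m, rfl⟩
    let f : (F ℤ).ρ.invariants := ⟨fun _ => m, fun g => rfl⟩
    have h1 : _ = (8 * m : ℤ) := (H0map f).trans (by
      simp only [l4, LinearMap.coe_mk, AddHom.coe_mk, f]; ring)
    have h2 : (groupCohomology.H0IsoOfIsTrivial Z).inv (8 * m : ℤ) =
        groupCohomology.map (MonoidHom.id Q) d4 0 ((groupCohomology.H0Iso (F ℤ)).inv f) := by
      rw [← h1, Iso.hom_inv_id_apply]
    change groupCohomology.δ sE4 0 1 rfl ((groupCohomology.H0IsoOfIsTrivial Z).inv (8 * m : ℤ)) = 0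
    rw [h2, hz]

end Q8Coh

/-- The fourth cohomology group of the quaternion group `Q₈` with trivial integral
coefficients is cyclic of order 8. -/
theorem stmt_10 :
    Nonempty ((groupCohomology (Rep.trivial ℤ (QuaternionGroup 2) ℤ) 4) ≃+ ZMod 8) := by
  have e1 : groupCohomology (kernel Q8Coh.d4) 1 ≃+
      groupCohomology (Rep.trivial ℤ (QuaternionGroup 2) ℤ) 4 :=
    Q8Coh.isoH1.toLinearEquiv.toAddEquiv
  let ψ : ℤ →+ groupCohomology (kernel Q8Coh.d4) 1 := Q8Coh.φ.hom.toAddMonoidHom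
  have e2 : ℤ ⧸ ψ.ker ≃+ groupCohomology (kernel Q8Coh.d4) 1 :=
    QuotientAddGroup.quotientKerEquivOfSurjective ψ Q8Coh.φ_surj
  have hk : AddSubgroup.zmultiples ((8 : ℕ) : ℤ) = ψ.ker := by
    ext n
    rw [AddMonoidHom.mem_ker, AddSubgroup.mem_zmultiples_iff]
    refine Iff.trans ?_ (Q8Coh.φ_ker n).symm
    constructor
    · rintro ⟨k, rfl⟩
      exact ⟨k, by simp [mul_comm]⟩
    · rintro ⟨k, rfl⟩
      exact ⟨k, by simp [mul_comm]⟩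
  exact ⟨e1.symm.trans (e2.symm.trans ((QuotientAddGroup.quotientAddEquivOfEq hk).symm.trans
    (Int.quotientZMultiplesNatEquivZMod 8)))⟩
end
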